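/- arXiv:1108.5575 — 4 statements merged into one kernel-verified Lean document; each statement's English description precedes it below -/
import Mathlib

section
/- Let ξ ∈ [0,1] be the prior probability of non-relevance, and let q, p ∈ [0,1] be the probabilities that the binary symbol 1 is emitted under non-relevance and under relevance, respectively. Then the vector (Helstrom) probability of error is at most the classical Bayes probability of error: (1/2)·(1 − √(1 − 4ξ(1−ξ)X)) ≤ min(ξq, (1−ξ)p) + min(ξ(1−q), (1−ξ)(1−p)), where X = (√(p·q) + √((1−p)(1−q)))². (In particular 1 − 4ξ(1−ξ)X ≥ 0, so the square root is well defined.) -/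
/-- A weighted two-term Cauchy–Schwarz inequality. -/
theorem mul_add_sq_le_of_mul_sq_eq {k u v m M n N : ℝ} (hm : 0 ≤ m) (hM : 0 ≤ M)
    (hn : 0 ≤ n) (hN : 0 ≤ N) (hu : k * u ^ 2 = m * M) (hv : k * v ^ 2 = n * N) :
    k * (u + v) ^ 2 ≤ (m + n) * (M + N) := by
  have cross : 2 * (k * u * v) ≤ m * N + n * M := by
    refine le_of_sq_le_sq ?_ (by positivity)
    calc (2 * (k * u * v)) ^ 2 = 4 * (k * u ^ 2) * (k * v ^ 2) := by ring
      _ = 4 * (m * M) * (n * N) := by rw [hu, hv]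
      _ ≤ (m * N + n * M) ^ 2 := by nlinarith [sq_nonneg (m * N - n * M)]
  linear_combination cross + hu + hv

/-- Binary case: the Helstrom (vector) probability of error is at most the
classical Bayes probability of error. -/
theorem helstrom_le_bayes_binary (ξ q p : ℝ)
    (hξ : ξ ∈ Set.Icc (0:ℝ) 1) (hq : q ∈ Set.Icc (0:ℝ) 1) (hp : p ∈ Set.Icc (0:ℝ) 1) :
    1 - 4 * ξ * (1 - ξ) * (Real.sqrt (p * q) + Real.sqrt ((1 - p) * (1 - q)))^2 ≥ 0 ∧
    (1/2) * (1 - Real.sqrt (1 - 4 * ξ * (1 - ξ) *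
        (Real.sqrt (p * q) + Real.sqrt ((1 - p) * (1 - q)))^2)) ≤
      min (ξ * q) ((1 - ξ) * p) + min (ξ * (1 - q)) ((1 - ξ) * (1 - p)) := by
  obtain ⟨hξ₀, hξ₁⟩ := hξ
  obtain ⟨hq₀, hq₁⟩ := hq
  obtain ⟨hp₀, hp₁⟩ := hp
  rw [← sub_nonneg] at hξ₁ hq₁ hp₁
  have ha : 0 ≤ ξ * q := by positivity
  have hb : 0 ≤ (1 - ξ) * p := by positivity
  have hc : 0 ≤ ξ * (1 - q) := by positivity
  have hd : 0 ≤ (1 - ξ) * (1 - p) := by positivity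
  have bound := mul_add_sq_le_of_mul_sq_eq (k := ξ * (1 - ξ))
    (u := √(p * q)) (v := √((1 - p) * (1 - q)))
    (le_min ha hb) (le_max_of_le_left ha) (le_min hc hd) (le_max_of_le_left hc)
    (by rw [Real.sq_sqrt (by positivity), min_mul_max]; ring)
    (by rw [Real.sq_sqrt (by positivity), min_mul_max]; ring)
  have h₁ := min_add_max (ξ * q) ((1 - ξ) * p)
  have h₂ := min_add_max (ξ * (1 - q)) ((1 - ξ) * (1 - p))
  set P := min (ξ * q) ((1 - ξ) * p) + min (ξ * (1 - q)) ((1 - ξ) * (1 - p)) with hP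
  have hmax : max (ξ * q) ((1 - ξ) * p) + max (ξ * (1 - q)) ((1 - ξ) * (1 - p)) = 1 - P := by
    linarith
  rw [hmax] at bound
  have key : (1 - 2 * P) ^ 2 ≤
      1 - 4 * ξ * (1 - ξ) * (√(p * q) + √((1 - p) * (1 - q))) ^ 2 := by
    linear_combination 4 * bound
  exact ⟨(sq_nonneg _).trans key, by linarith [Real.le_sqrt_of_sq_le key]⟩
end

section
/- Let n ≥ 1, let p₀, p₁ : Fin n → ℝ be probability distributions (nonnegative entries summing to 1), and let ξ ∈ [0,1]. Setting F = (∑ₓ √(p₀(x)·p₁(x)))², one has (1/2)·(1 − √(1 − 4ξ(1−ξ)F)) ≤ ∑ₓ min(ξ·p₀(x), (1−ξ)·p₁(x)). (In particular 1 − 4ξ(1−ξ)F ≥ 0.) -/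
/-- The Cauchy–Schwarz bound on the Bhattacharyya sum in terms of minima and maxima. -/
theorem sq_sum_sqrt_mul_le_sum_min_mul_sum_max {ι : Type*} (s : Finset ι) {a b : ι → ℝ}
    (ha : ∀ i ∈ s, 0 ≤ a i) (hb : ∀ i ∈ s, 0 ≤ b i) :
    (∑ i ∈ s, √(a i * b i)) ^ 2 ≤ (∑ i ∈ s, min (a i) (b i)) * ∑ i ∈ s, max (a i) (b i) := by
  refine Finset.sum_sq_le_sum_mul_sum_of_sq_le_mul s
    (fun i hi => le_min (ha i hi) (hb i hi)) (fun i hi => le_max_of_le_left (ha i hi))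
    (fun i hi => ?_)
  rw [Real.sq_sqrt (mul_nonneg (ha i hi) (hb i hi)), min_mul_max]

open Finset in
/-- Finite-alphabet case: the Helstrom (vector) probability of error is at most
the classical Bayes probability of error. -/
theorem helstrom_le_bayes (n : ℕ) (hn : 1 ≤ n) (p₀ p₁ : Fin n → ℝ)
    (h₀ : ∀ x, 0 ≤ p₀ x) (h₁ : ∀ x, 0 ≤ p₁ x)
    (hs₀ : ∑ x, p₀ x = 1) (hs₁ : ∑ x, p₁ x = 1)
    (ξ : ℝ) (hξ : ξ ∈ Set.Icc (0:ℝ) 1) :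
    1 - 4 * ξ * (1 - ξ) * (∑ x, Real.sqrt (p₀ x * p₁ x))^2 ≥ 0 ∧
    (1/2) * (1 - Real.sqrt (1 - 4 * ξ * (1 - ξ) * (∑ x, Real.sqrt (p₀ x * p₁ x))^2)) ≤
      ∑ x, min (ξ * p₀ x) ((1 - ξ) * p₁ x) := by
  obtain ⟨hξ₀, hξ₁⟩ := hξ
  have hξ₁' : 0 ≤ 1 - ξ := sub_nonneg.2 hξ₁
  set e := ∑ x, min (ξ * p₀ x) ((1 - ξ) * p₁ x) with he
  have hmax : ∑ x, max (ξ * p₀ x) ((1 - ξ) * p₁ x) = 1 - e := by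
    rw [eq_sub_iff_add_eq', he, ← sum_add_distrib]
    simp only [min_add_max, sum_add_distrib, ← mul_sum, hs₀, hs₁]
    ring
  have hF : ξ * (1 - ξ) * (∑ x, √(p₀ x * p₁ x)) ^ 2 =
      (∑ x, √(ξ * p₀ x * ((1 - ξ) * p₁ x))) ^ 2 := by
    have hsqrt : ∀ x, √(ξ * p₀ x * ((1 - ξ) * p₁ x)) = √(ξ * (1 - ξ)) * √(p₀ x * p₁ x) :=
      fun x => by rw [mul_mul_mul_comm, Real.sqrt_mul (mul_nonneg hξ₀ hξ₁')]
    simp only [hsqrt, ← mul_sum]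
    rw [mul_pow, Real.sq_sqrt (mul_nonneg hξ₀ hξ₁')]
  have hCS := sq_sum_sqrt_mul_le_sum_min_mul_sum_max univ
    (fun x _ => mul_nonneg hξ₀ (h₀ x)) (fun x _ => mul_nonneg hξ₁' (h₁ x))
  rw [← hF, ← he, hmax] at hCS
  have hsq : (1 - 2 * e) ^ 2 ≤ 1 - 4 * ξ * (1 - ξ) * (∑ x, √(p₀ x * p₁ x)) ^ 2 := by
    linarith
  refine ⟨(sq_nonneg _).trans hsq, ?_⟩
  linarith [Real.le_sqrt_of_sq_le hsq]
end

section
/- Let n ≥ 1, let p₀, p₁ : Fin n → ℝ be probability distributions (nonnegative entries summing to 1), and let ξ ∈ [0,1]. Then (∑ₓ |ξ·p₀(x) − (1−ξ)·p₁(x)|)² + 4ξ(1−ξ)·(∑ₓ √(p₀(x)·p₁(x)))² ≤ 1. -/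
open Finset in
/-- Cauchy–Schwarz applied to `(a - b)² = (a + b - 2√(ab)) (a + b + 2√(ab))`. -/
theorem sq_sum_abs_sub_add_four_mul_sq_sum_sqrt_le {ι : Type*} (s : Finset ι) {a b : ι → ℝ}
    (ha : ∀ i ∈ s, 0 ≤ a i) (hb : ∀ i ∈ s, 0 ≤ b i) :
    (∑ i ∈ s, |a i - b i|) ^ 2 + 4 * (∑ i ∈ s, Real.sqrt (a i * b i)) ^ 2 ≤
      (∑ i ∈ s, (a i + b i)) ^ 2 := by
  have two_sqrt_le : ∀ i ∈ s, 2 * Real.sqrt (a i * b i) ≤ a i + b i := fun i hi => by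
    rw [Real.sqrt_mul (ha i hi)]
    nlinarith [sq_nonneg (Real.sqrt (a i) - Real.sqrt (b i)), Real.sq_sqrt (ha i hi),
      Real.sq_sqrt (hb i hi)]
  have cauchy := sum_sq_le_sum_mul_sum_of_sq_le_mul s
    (r := fun i => |a i - b i|)
    (f := fun i => a i + b i - 2 * Real.sqrt (a i * b i))
    (g := fun i => a i + b i + 2 * Real.sqrt (a i * b i))
    (fun i hi => sub_nonneg.2 (two_sqrt_le i hi))
    (fun i hi => add_nonneg (add_nonneg (ha i hi) (hb i hi)) (by positivity))
    (fun i hi => le_of_eq <| by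
      rw [sq_abs]
      linear_combination 4 * Real.sq_sqrt (mul_nonneg (ha i hi) (hb i hi)))
  rw [sum_sub_distrib, sum_add_distrib (g := fun i => 2 * Real.sqrt (a i * b i)),
    ← mul_sum] at cauchy
  linarith

open Finset in
/-- Key inequality relating the weighted total variation distance and the
Bhattacharyya (fidelity) coefficient. -/
theorem tv_sq_add_fidelity_le_one (n : ℕ) (hn : 1 ≤ n) (p₀ p₁ : Fin n → ℝ)
    (h₀ : ∀ x, 0 ≤ p₀ x) (h₁ : ∀ x, 0 ≤ p₁ x)
    (hs₀ : ∑ x, p₀ x = 1) (hs₁ : ∑ x, p₁ x = 1)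
    (ξ : ℝ) (hξ : ξ ∈ Set.Icc (0:ℝ) 1) :
    (∑ x, |ξ * p₀ x - (1 - ξ) * p₁ x|)^2 +
      4 * ξ * (1 - ξ) * (∑ x, Real.sqrt (p₀ x * p₁ x))^2 ≤ 1 := by
  have hξ₁ : 0 ≤ 1 - ξ := sub_nonneg.2 hξ.2
  have hξξ : 0 ≤ ξ * (1 - ξ) := mul_nonneg hξ.1 hξ₁
  have key := sq_sum_abs_sub_add_four_mul_sq_sum_sqrt_le univ
    (a := fun x => ξ * p₀ x) (b := fun x => (1 - ξ) * p₁ x)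
    (fun x _ => mul_nonneg hξ.1 (h₀ x)) (fun x _ => mul_nonneg hξ₁ (h₁ x))
  have sqrt_eq : ∀ x, Real.sqrt (ξ * p₀ x * ((1 - ξ) * p₁ x)) =
      Real.sqrt (ξ * (1 - ξ)) * Real.sqrt (p₀ x * p₁ x) := fun x => by
    rw [mul_mul_mul_comm, Real.sqrt_mul hξξ]
  simp only [sqrt_eq, sum_add_distrib, ← mul_sum, hs₀, hs₁, mul_pow, Real.sq_sqrt hξξ] at key
  linarith
end

section
/- Let ξ ∈ [0,1] and c ∈ ℝ. Then the minimum over η ∈ ℝ of the function f(η) = ξ·sin²η + (1−ξ)·sin²(c−η) exists and equals (1/2)·(1 − √(ξ² + (1−ξ)² + 2ξ(1−ξ)·cos(2c))), which equals (1/2)·(1 − √(1 − 4ξ(1−ξ)·sin²c)). -/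
/-- The maximum of a real sinusoid `a cos θ + b sin θ` is its amplitude `√(a² + b²)`. -/
theorem isGreatest_range_mul_cos_add_mul_sin (a b : ℝ) :
    IsGreatest (Set.range fun θ : ℝ => a * Real.cos θ + b * Real.sin θ)
      (Real.sqrt (a ^ 2 + b ^ 2)) := by
  constructor
  · have hr : ‖(⟨a, b⟩ : ℂ)‖ = Real.sqrt (a ^ 2 + b ^ 2) := by
      rw [Complex.norm_def, Complex.normSq_mk, sq, sq]
    have hcos := Complex.norm_mul_cos_arg ⟨a, b⟩
    have hsin := Complex.norm_mul_sin_arg ⟨a, b⟩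
    rw [hr] at hcos hsin
    refine ⟨Complex.arg ⟨a, b⟩, ?_⟩
    linear_combination (-Real.cos (Complex.arg ⟨a, b⟩)) * hcos -
      Real.sin (Complex.arg ⟨a, b⟩) * hsin +
      Real.sqrt (a ^ 2 + b ^ 2) * Real.sin_sq_add_cos_sq (Complex.arg ⟨a, b⟩)
  · rintro _ ⟨θ, rfl⟩
    apply Real.le_sqrt_of_sq_le
    have hid : a ^ 2 + b ^ 2 - (a * Real.cos θ + b * Real.sin θ) ^ 2 =
        (a * Real.sin θ - b * Real.cos θ) ^ 2 := by
      linear_combination (-(a ^ 2 + b ^ 2)) * Real.sin_sq_add_cos_sq θ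
    linarith [sq_nonneg (a * Real.sin θ - b * Real.cos θ)]

/-- The weighted sum of squared sines as a sinusoid in the doubled angle. -/
theorem mul_sin_sq_add_mul_sin_sub_sq (ξ c η : ℝ) :
    ξ * Real.sin η ^ 2 + (1 - ξ) * Real.sin (c - η) ^ 2 =
      (1 / 2) * (1 - ((ξ + (1 - ξ) * Real.cos (2 * c)) * Real.cos (2 * η) +
        (1 - ξ) * Real.sin (2 * c) * Real.sin (2 * η))) := by
  have hcos : Real.cos (2 * (c - η)) =
      Real.cos (2 * c) * Real.cos (2 * η) + Real.sin (2 * c) * Real.sin (2 * η) := by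
    rw [mul_sub, Real.cos_sub]
  rw [Real.sin_sq_eq_half_sub η, Real.sin_sq_eq_half_sub (c - η), hcos]
  ring

/-- The minimum over `η` of `ξ·sin²η + (1−ξ)·sin²(c−η)` exists and equals
`(1/2)(1 − √(ξ² + (1−ξ)² + 2ξ(1−ξ)cos(2c)))`, which equals
`(1/2)(1 − √(1 − 4ξ(1−ξ)sin²c))`. -/
theorem min_error_angle (ξ c : ℝ) (hξ : ξ ∈ Set.Icc (0:ℝ) 1) :
    IsLeast (Set.range fun η : ℝ => ξ * Real.sin η ^ 2 + (1 - ξ) * Real.sin (c - η) ^ 2)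
      ((1/2) * (1 - Real.sqrt (ξ^2 + (1 - ξ)^2 + 2 * ξ * (1 - ξ) * Real.cos (2 * c)))) ∧
    (1/2) * (1 - Real.sqrt (ξ^2 + (1 - ξ)^2 + 2 * ξ * (1 - ξ) * Real.cos (2 * c))) =
      (1/2) * (1 - Real.sqrt (1 - 4 * ξ * (1 - ξ) * Real.sin c ^ 2)) := by
  constructor
  · have hamp : ξ ^ 2 + (1 - ξ) ^ 2 + 2 * ξ * (1 - ξ) * Real.cos (2 * c) =
        (ξ + (1 - ξ) * Real.cos (2 * c)) ^ 2 + ((1 - ξ) * Real.sin (2 * c)) ^ 2 := by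
      linear_combination (-(1 - ξ) ^ 2) * Real.sin_sq_add_cos_sq (2 * c)
    obtain ⟨⟨θ, hθ⟩, hmax⟩ := isGreatest_range_mul_cos_add_mul_sin
      (ξ + (1 - ξ) * Real.cos (2 * c)) ((1 - ξ) * Real.sin (2 * c))
    simp only [mul_sin_sq_add_mul_sin_sub_sq, hamp]
    constructor
    · refine ⟨θ / 2, ?_⟩
      simp only [mul_div_cancel₀ θ (two_ne_zero' ℝ), ← hθ]
    · rintro _ ⟨η, rfl⟩
      have hle := hmax ⟨2 * η, rfl⟩
      dsimp only at hle ⊢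
      linarith
  · congr 3
    rw [Real.cos_two_mul, Real.cos_sq']
    ring
end
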